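/- Let κ < 1/2 and 0 < c₁ < c₂ < √2, and let (c,x) ↦ (η_c(x), v_c(x)) be a jointly C¹ family of real functions with 0 < η_c < 1, such that η_c, η_c', η_c'', v_c, ∂_c η_c, ∂_c v_c decay exponentially in x uniformly for c in compact subsets of (c₁,c₂), and such that for each c the pair solves the traveling-wave system −c η_c = 2 v_c (1−η_c) and −c v_c = −( η_c''/(2(1−η_c)) + (η_c')²/(4(1−η_c)²) + v_c² − η_c − κ η_c'' ) on ℝ. Then the function d(c) = E((η_c,v_c)) − c P((η_c,v_c)) is differentiable on (c₁,c₂) with d'(c) = −P((η_c,v_c)); consequently, if c ↦ P((η_c,v_c)) is C¹, then d is twice differentiable with d''(c) = −(d/dc) P((η_c,v_c)). -/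

import Mathlib

open MeasureTheory Real Filter Set

noncomputable section

/-- The hydrodynamical energy
E((η,v)) = ∫ (η')²/(4(1-η)) + v²(1-η) + (1/2)(η² - κ(η')²). -/
def Ehy (κ : ℝ) (η v : ℝ → ℝ) : ℝ :=
  ∫ x : ℝ,
    (deriv η x) ^ 2 / (4 * (1 - η x)) + (v x) ^ 2 * (1 - η x)
      + (1 / 2) * ((η x) ^ 2 - κ * (deriv η x) ^ 2)

/-- The hydrodynamical momentum P((η,v)) = -∫ η v. -/
def Phy (η v : ℝ → ℝ) : ℝ := -∫ x : ℝ, η x * v x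

/-!
Write the action `E - c P` as `∫ k(η) (η')² + W(c, η, v)`. By the identity
`k₁ p₁² - k₀ p₀² = (k₁ p₁ + k₀ p₀) (p₁ - p₀) + (k₁ - k₀) p₁ p₀`, an integration by parts and the
equation `(2 k(η) η')' = g` satisfied by each wave, the difference of the actions of the waves of
speeds `t` and `c` is the integral of an expression free of second derivatives, which is `t - c`
times a quantity dominated by an integrable function. At `t = c` the traveling-wave system cancels
every term of its `t`-derivative containing `∂_c η` or `∂_c v`, leaving the explicit derivative
`η v` of the density, so that `d'(c) = ∫ η v = -P`. The same domination shows that `P` is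
differentiable.
-/

open Asymptotics Topology

section UniformBigO

variable {X E : Type*} [NormedAddCommGroup E]

theorem isBigO_prod_top_of_eventually_le {ι : Type*} {l : Filter ι} {f : ι → X → E} {w : X → ℝ}
    (h : ∀ᶠ t in l, ∀ x, ‖f t x‖ ≤ w x) :
    (fun z : ι × X => f z.1 z.2) =O[l ×ˢ ⊤] fun z => w z.2 :=
  .of_bound' <| (h.prod_inl ⊤).mono fun z hz => (hz z.2).trans (le_abs_self _)

theorem isBigO_sub_of_eventually_norm_deriv_le [NormedSpace ℝ E] {f : ℝ → X → E} {w : X → ℝ}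
    {c : ℝ} (hf : ∀ᶠ t in 𝓝 c, ∀ x, DifferentiableAt ℝ (fun s => f s x) t)
    (hw : ∀ᶠ t in 𝓝 c, ∀ x, ‖deriv (fun s => f s x) t‖ ≤ w x) :
    (fun z : ℝ × X => f z.1 z.2 - f c z.2) =O[𝓝 c ×ˢ ⊤] fun z => (z.1 - c) * w z.2 := by
  obtain ⟨ε, hε, hball⟩ := Metric.eventually_nhds_iff_ball.1 (hf.and hw)
  have hmem : ∀ᶠ t in 𝓝 c, t ∈ Metric.ball c ε := Metric.ball_mem_nhds c hε
  refine .of_bound' <| (hmem.prod_inl ⊤).mono fun z hz => ?_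
  calc ‖f z.1 z.2 - f c z.2‖ ≤ w z.2 * ‖z.1 - c‖ :=
        (convex_ball c ε).norm_image_sub_le_of_norm_deriv_le (fun t ht => (hball t ht).1 z.2)
          (fun t ht => (hball t ht).2 z.2) (Metric.mem_ball_self hε) hz
    _ ≤ ‖(z.1 - c) * w z.2‖ := by
        rw [norm_mul, mul_comm]
        gcongr
        exact le_abs_self _

variable [MeasurableSpace X] {μ : Measure X} {w : X → ℝ}

theorem eventually_integrable_of_isBigO {ι : Type*} {l : Filter ι} {F : ι → X → E}
    (hF : (fun z : ι × X => F z.1 z.2) =O[l ×ˢ ⊤] fun z => w z.2) (hw : Integrable w μ)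
    (hmeas : ∀ᶠ t in l, AEStronglyMeasurable (F t) μ) : ∀ᶠ t in l, Integrable (F t) μ := by
  obtain ⟨M, hM⟩ := hF.bound
  filter_upwards [mem_prod_top.1 hM, hmeas] with t ht hmt
  exact (hw.norm.const_mul M).mono' hmt (.of_forall ht)

theorem hasDerivAt_integral_of_isBigO_sub [NormedSpace ℝ E] {F : ℝ → X → E} {F' : X → E} {c : ℝ}
    (hF : ∀ᶠ t in 𝓝 c, Integrable (F t) μ)
    (hsub : (fun z : ℝ × X => F z.1 z.2 - F c z.2) =O[𝓝 c ×ˢ ⊤] fun z => (z.1 - c) * w z.2)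
    (hw : Integrable w μ) (hF' : ∀ x, HasDerivAt (fun t => F t x) (F' x) c) :
    HasDerivAt (fun t => ∫ x, F t x ∂μ) (∫ x, F' x ∂μ) c := by
  obtain ⟨M, hM⟩ := hsub.bound
  have hFc : Integrable (F c) μ := hF.self_of_nhds
  have hslope : ∀ᶠ t in 𝓝[≠] c,
      slope (fun s => ∫ x, F s x ∂μ) c t = ∫ x, slope (fun s => F s x) c t ∂μ := by
    filter_upwards [nhdsWithin_le_nhds hF] with t ht
    simp only [slope_def_module, integral_smul, integral_sub ht hFc]
  refine hasDerivAt_iff_tendsto_slope.2 (.congr' (hslope.mono fun t ht => ht.symm) ?_)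
  refine tendsto_integral_filter_of_dominated_convergence (fun x => M * ‖w x‖) ?_ ?_
    (hw.norm.const_mul M) (.of_forall fun x => hasDerivAt_iff_tendsto_slope.1 (hF' x))
  · filter_upwards [nhdsWithin_le_nhds hF] with t ht
    simp only [slope_def_module]
    exact ((ht.sub hFc).smul (t - c)⁻¹).aestronglyMeasurable
  · filter_upwards [nhdsWithin_le_nhds (mem_prod_top.1 hM), self_mem_nhdsWithin] with t ht hne
    refine .of_forall fun x => ?_
    have hpos : 0 < ‖t - c‖ := norm_pos_iff.2 (sub_ne_zero.2 hne)
    rw [slope_def_module, norm_smul, norm_inv, inv_mul_le_iff₀ hpos]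
    exact (ht x).trans_eq (by rw [norm_mul]; ring)

end UniformBigO

section Calculus

theorem hasDerivAt_mul_of_eq_zero {𝕜 : Type*} [NontriviallyNormedField 𝕜] {f g : 𝕜 → 𝕜}
    {f' c : 𝕜} (hf : HasDerivAt f f' c) (hfc : f c = 0) (hg : ContinuousAt g c) :
    HasDerivAt (fun t => f t * g t) (f' * g c) c := by
  rw [hasDerivAt_iff_tendsto_slope] at hf ⊢
  refine (hf.mul (hg.tendsto.mono_left nhdsWithin_le_nhds)).congr fun t => ?_
  simp only [slope_def_field, hfc]
  ring

variable {E : Type*} [NormedAddCommGroup E] [NormedSpace ℝ E]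

theorem differentiableAt_left_of_uncurry {f : ℝ → ℝ → E} {c x : ℝ}
    (hf : DifferentiableAt ℝ (fun z : ℝ × ℝ => f z.1 z.2) (c, x)) :
    DifferentiableAt ℝ (fun t => f t x) c :=
  hf.comp (f := fun t => (t, x)) c (differentiableAt_id.prodMk (differentiableAt_const x))

theorem continuousAt_deriv_of_contDiffAt_uncurry {f : ℝ → ℝ → E} {c x : ℝ}
    (hf : ContDiffAt ℝ 1 (fun z : ℝ × ℝ => f z.1 z.2) (c, x)) :
    ContinuousAt (fun t => deriv (f t) x) c :=
  ((ContDiffAt.fderiv (m := 0) hf contDiffAt_const le_rfl).continuousAt).clm_apply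
    continuousAt_const

theorem integrable_exp_neg_mul_abs {b : ℝ} (hb : 0 < b) :
    Integrable fun x : ℝ => exp (-b * |x|) := by
  have hcont : Continuous fun x : ℝ => exp (-b * |x|) := by fun_prop
  refine hcont.locallyIntegrable.integrable_of_isBigO_atTop_of_norm_isNegInvariant
    (g := fun x => exp (-b * x)) (.of_forall fun x => by simp) ?_
    ⟨Ioi 0, Ioi_mem_atTop 0, integrableOn_exp_mul_Ioi (neg_lt_zero.2 hb) 0⟩
  exact EventuallyEq.isBigO <| (eventually_ge_atTop 0).mono fun x hx => by
    simp only [abs_of_nonneg hx]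

theorem tendsto_exp_neg_mul_abs_cocompact {b : ℝ} (hb : 0 < b) :
    Tendsto (fun x : ℝ => exp (-b * |x|)) (cocompact ℝ) (𝓝 0) :=
  tendsto_exp_atBot.comp <|
    (tendsto_norm_cocompact_atTop (E := ℝ)).const_mul_atTop_of_neg (neg_lt_zero.2 hb)

theorem integral_mul_sq_add_sub {a₀ a₁ u₀ u₁ p₀ p₁ g₀ g₁ W₀ W₁ : ℝ → ℝ}
    (hu₀ : ∀ x, HasDerivAt u₀ (p₀ x) x) (hu₁ : ∀ x, HasDerivAt u₁ (p₁ x) x)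
    (hg₀ : ∀ x, HasDerivAt (fun y => 2 * (a₀ y * p₀ y)) (g₀ x) x)
    (hg₁ : ∀ x, HasDerivAt (fun y => 2 * (a₁ y * p₁ y)) (g₁ x) x)
    (hL₀ : Integrable fun x => a₀ x * p₀ x ^ 2 + W₀ x)
    (hL₁ : Integrable fun x => a₁ x * p₁ x ^ 2 + W₁ x)
    (hqp : Integrable fun x => (a₁ x * p₁ x + a₀ x * p₀ x) * (p₁ x - p₀ x))
    (hgu : Integrable fun x => (g₁ x + g₀ x) / 2 * (u₁ x - u₀ x))
    (hqu : Integrable fun x => (a₁ x * p₁ x + a₀ x * p₀ x) * (u₁ x - u₀ x)) :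
    (∫ x, (a₁ x * p₁ x ^ 2 + W₁ x)) - ∫ x, (a₀ x * p₀ x ^ 2 + W₀ x)
      = ∫ x, ((a₁ x - a₀ x) * (p₁ x * p₀ x) + (W₁ x - W₀ x)
          - (g₁ x + g₀ x) / 2 * (u₁ x - u₀ x)) := by
  have hflux : ∀ x, HasDerivAt (fun y => a₁ y * p₁ y + a₀ y * p₀ y) ((g₁ x + g₀ x) / 2) x :=
    fun x => (((hg₁ x).add (hg₀ x)).div_const 2).congr_of_eventuallyEq <| .of_forall fun y => by
      simp only [Pi.add_apply]
      ring
  have hparts := integral_mul_deriv_eq_deriv_mul_of_integrable (fun x _ => hflux x)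
    (fun x _ => (hu₁ x).fun_sub (hu₀ x)) hqp hgu hqu
  have hdiff : Integrable fun x => a₁ x * p₁ x ^ 2 + W₁ x - (a₀ x * p₀ x ^ 2 + W₀ x) :=
    hL₁.sub hL₀
  have hrest : (∫ x, (a₁ x * p₁ x ^ 2 + W₁ x)) - (∫ x, (a₀ x * p₀ x ^ 2 + W₀ x))
      - ∫ x, (a₁ x * p₁ x + a₀ x * p₀ x) * (p₁ x - p₀ x)
      = ∫ x, ((a₁ x - a₀ x) * (p₁ x * p₀ x) + (W₁ x - W₀ x)) := by
    rw [← integral_sub hL₁ hL₀, ← integral_sub hdiff hqp]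
    congr with x
    ring
  have hrest_int : Integrable fun x => (a₁ x - a₀ x) * (p₁ x * p₀ x) + (W₁ x - W₀ x) :=
    (hdiff.sub hqp).congr <| .of_forall fun x => by
      simp only [Pi.sub_apply]
      ring
  rw [integral_sub hrest_int hgu, ← hrest, hparts]
  ring

end Calculus

section BoundedFactor

variable {α : Type*} {l : Filter α}

theorem isBigO_top_one_of_tendsto_cocompact {X E : Type*} [TopologicalSpace X]
    [NormedAddCommGroup E] {f : X → E} {y : E} (hf : Continuous f)
    (hlim : Tendsto f (cocompact X) (𝓝 y)) : f =O[⊤] fun _ => (1 : ℝ) := by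
  have hrange := hf.isBounded_range_iff_isBigO.2 (hlim.isBigO_one ℝ)
  obtain ⟨M, hM⟩ := hrange.exists_norm_le
  exact isBigO_top.2 ⟨M, fun x => by simpa using hM _ (mem_range_self x)⟩

theorem isBigO_mul_of_isBigO_one {f g k : α → ℝ} (hf : f =O[l] fun _ => (1 : ℝ))
    (hg : g =O[l] k) : (fun z => f z * g z) =O[l] k := by
  simpa only [one_mul] using hf.mul hg

theorem isBigO_inv_of_tendsto_sub {f f₀ : α → ℝ} (hsub : Tendsto (fun z => f₀ z - f z) l (𝓝 0))
    (hf₀ : ∀ z, f₀ z ≠ 0) (hinv : (fun z => (f₀ z)⁻¹) =O[l] fun _ => (1 : ℝ)) :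
    (fun z => (f z)⁻¹) =O[l] fun _ => (1 : ℝ) := by
  have hone : (fun _ => (1 : ℝ)) =O[l] f₀ := by
    simpa using hinv.inv_rev (.of_forall fun z hz => absurd hz (inv_ne_zero (hf₀ z)))
  have hlittle : (fun z => f₀ z - f z) =o[l] f₀ := ((isLittleO_one_iff ℝ).2 hsub).trans_isBigO hone
  have hle : f₀ =O[l] f := by simpa using hlittle.right_isBigO_sub
  exact (hle.inv_rev (.of_forall fun z hz => absurd hz (hf₀ z))).trans hinv

theorem isBigO_slice {ι X E F : Type*} [TopologicalSpace ι] [Norm E] [Norm F] {f : ι → X → E}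
    {g : X → F} {c : ι} (h : (fun z : ι × X => f z.1 z.2) =O[𝓝 c ×ˢ ⊤] fun z => g z.2) :
    (fun z : ι × X => f c z.2) =O[𝓝 c ×ˢ ⊤] fun z => g z.2 :=
  h.comp_tendsto (tendsto_const_nhds.prodMk tendsto_snd)

end BoundedFactor

section Lagrangian

/-- The coefficient of `(η')²` in the Lagrangian density of `E - c P`, as a function of `s = η`. -/
def kineticCoeff (κ s : ℝ) : ℝ := (1 - s)⁻¹ / 4 - κ / 2

/-- The derivative-free part of the Lagrangian density of `E - c P`, as a function of `s = η` and
`w = v`. -/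
def potentialDensity (c s w : ℝ) : ℝ := w ^ 2 * (1 - s) + s ^ 2 / 2 + c * (s * w)

/-- The Lagrangian density of the action `E - c P`. -/
def actionDensity (κ c : ℝ) (η v : ℝ → ℝ) (x : ℝ) : ℝ :=
  kineticCoeff κ (η x) * deriv η x ^ 2 + potentialDensity c (η x) (v x)

/-- The partial derivative of the Lagrangian density of `E - c P` with respect to `η`; `κ` does not
enter because `(η')²` carries it with a constant coefficient. -/
def densityGradient (c : ℝ) (η v : ℝ → ℝ) (x : ℝ) : ℝ :=
  ((1 - η x)⁻¹ * deriv η x) ^ 2 / 4 - v x ^ 2 + η x + c * v x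

theorem hasDerivAt_kineticCoeff (κ : ℝ) {s : ℝ} (hs : s ≠ 1) :
    HasDerivAt (kineticCoeff κ) ((1 - s)⁻¹ ^ 2 / 4) s := by
  have hinv := ((hasDerivAt_id' s).const_sub 1).fun_inv (sub_ne_zero.2 hs.symm)
  exact ((hinv.div_const 4).sub_const (κ / 2)).congr_deriv (by simp)

theorem kineticCoeff_sub (κ : ℝ) {s r : ℝ} (hs : s ≠ 1) (hr : r ≠ 1) :
    kineticCoeff κ s - kineticCoeff κ r = (1 - s)⁻¹ * ((1 - r)⁻¹ * (s - r)) / 4 := by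
  have hs' : 1 - s ≠ 0 := sub_ne_zero.2 hs.symm
  have hr' : 1 - r ≠ 0 := sub_ne_zero.2 hr.symm
  simp only [kineticCoeff]
  field_simp
  ring

theorem potentialDensity_sub (c d s r w u : ℝ) :
    potentialDensity d s w - potentialDensity c r u
      = ((w + u) * (1 - s) + c * r) * (w - u) + ((s + r) / 2 + c * w - u ^ 2) * (s - r)
        + (d - c) * (s * w) := by
  simp only [potentialDensity]
  ring

theorem hasDerivAt_potentialDensity {s w : ℝ → ℝ} {s' w' c : ℝ} (hs : HasDerivAt s s' c)
    (hw : HasDerivAt w w' c) :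
    HasDerivAt (fun t => potentialDensity t (s t) (w t))
      ((s c + c * w c - w c ^ 2) * s' + (2 * w c * (1 - s c) + c * s c) * w' + s c * w c) c := by
  refine ((((hw.pow 2).mul (hs.const_sub 1)).add ((hs.pow 2).div_const 2)).add
    ((hasDerivAt_id' c).mul (hs.mul hw))).congr_deriv ?_
  simp only [Nat.cast_ofNat, Nat.add_one_sub_one, pow_one, Pi.pow_apply, Pi.mul_apply]
  ring

theorem Ehy_sub_mul_Phy {κ c : ℝ} {η v : ℝ → ℝ} (hL : Integrable (actionDensity κ c η v))
    (hηv : Integrable fun x => η x * v x) :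
    Ehy κ η v - c * Phy η v = ∫ x, actionDensity κ c η v x := by
  have hE : Ehy κ η v = ∫ x, (actionDensity κ c η v x - c * (η x * v x)) := by
    refine integral_congr_ae (.of_forall fun x => ?_)
    simp only [actionDensity, kineticCoeff, potentialDensity, div_eq_mul_inv, mul_inv]
    ring
  rw [hE, integral_sub hL (hηv.const_mul c), integral_const_mul, Phy]
  ring

end Lagrangian

/-- Hydrodynamical traveling waves `(η, v)` of speed `c`. The quotients in `eq_density` are genuine
because of `lt_one`. -/
structure IsTravelingWave (κ c : ℝ) (η v : ℝ → ℝ) : Prop where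
  differentiable : Differentiable ℝ η
  differentiable_deriv : Differentiable ℝ (deriv η)
  lt_one : ∀ x, η x < 1
  eq_velocity : ∀ x, -c * η x = 2 * v x * (1 - η x)
  eq_density : ∀ x, -c * v x = -(deriv (deriv η) x / (2 * (1 - η x))
    + deriv η x ^ 2 / (4 * (1 - η x) ^ 2) + v x ^ 2 - η x - κ * deriv (deriv η) x)

namespace IsTravelingWave

variable {κ c : ℝ} {η v : ℝ → ℝ}

theorem of_contDiff (hη : ContDiff ℝ 2 η) (hlt : ∀ x, η x < 1)
    (hsys : ∀ x, -c * η x = 2 * v x * (1 - η x) ∧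
      -c * v x = -(deriv (deriv η) x / (2 * (1 - η x)) + deriv η x ^ 2 / (4 * (1 - η x) ^ 2)
        + v x ^ 2 - η x - κ * deriv (deriv η) x)) :
    IsTravelingWave κ c η v :=
  ⟨hη.differentiable two_ne_zero, hη.differentiable_deriv_two, hlt, fun x => (hsys x).1,
    fun x => (hsys x).2⟩

variable (h : IsTravelingWave κ c η v)
include h

theorem one_sub_ne_zero (x : ℝ) : 1 - η x ≠ 0 := (sub_pos.2 (h.lt_one x)).ne'

theorem hasDerivAt_flux (x : ℝ) :
    HasDerivAt (fun y => 2 * (kineticCoeff κ (η y) * deriv η y)) (densityGradient c η v x) x := by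
  have hk := (hasDerivAt_kineticCoeff κ (h.lt_one x).ne).comp x (h.differentiable x).hasDerivAt
  refine ((hk.mul (h.differentiable_deriv x).hasDerivAt).const_mul 2).congr_deriv ?_
  have heq : c * v x = (1 - η x)⁻¹ * deriv (deriv η) x / 2
      + ((1 - η x)⁻¹ * deriv η x) ^ 2 / 4 + v x ^ 2 - η x - κ * deriv (deriv η) x := by
    have hη := h.eq_density x
    simp only [div_eq_mul_inv, mul_inv, ← inv_pow] at hη
    linear_combination -hη
  simp only [densityGradient, kineticCoeff, Function.comp_apply, heq]
  ring

theorem continuous_inv : Continuous fun x => (1 - η x)⁻¹ :=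
  (continuous_const.sub h.differentiable.continuous).inv₀ h.one_sub_ne_zero

theorem continuous_velocity : Continuous v := by
  have hv : v = fun x => -c * η x * (1 - η x)⁻¹ / 2 := by
    ext x
    have := h.one_sub_ne_zero x
    rw [h.eq_velocity x]
    field_simp
  rw [hv]
  have := h.continuous_inv
  have := h.differentiable.continuous
  fun_prop

theorem continuous_kineticCoeff : Continuous fun x => kineticCoeff κ (η x) :=
  (h.continuous_inv.div_const 4).sub continuous_const

theorem continuous_potentialDensity : Continuous fun x => potentialDensity c (η x) (v x) := by
  have := h.differentiable.continuous
  have := h.continuous_velocity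
  unfold potentialDensity
  fun_prop

theorem continuous_densityGradient : Continuous (densityGradient c η v) := by
  have := h.continuous_inv
  have := h.differentiable.continuous
  have := h.differentiable_deriv.continuous
  have := h.continuous_velocity
  unfold densityGradient
  fun_prop

theorem continuous_actionDensity : Continuous (actionDensity κ c η v) :=
  (h.continuous_kineticCoeff.mul (h.differentiable_deriv.continuous.pow 2)).add
    h.continuous_potentialDensity

end IsTravelingWave

/-- `w` dominates a family `(η, v)`, its first `x`-derivative and its derivative in the parameter,
uniformly for parameters near `c`. -/
structure IsMajorantAt (η v : ℝ → ℝ → ℝ) (c : ℝ) (w : ℝ → ℝ) : Prop where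
  continuous : Continuous w
  integrable : Integrable w
  tendsto : Tendsto w (cocompact ℝ) (𝓝 0)
  eventually_le : ∀ᶠ t in 𝓝 c, ∀ x, |η t x| + |deriv (η t) x| + |v t x|
    + |deriv (fun s => η s x) t| + |deriv (fun s => v s x) t| ≤ w x

namespace IsMajorantAt

variable {η v : ℝ → ℝ → ℝ} {c : ℝ} {w : ℝ → ℝ}

theorem of_exp_decay {A C : ℝ} (hC : 0 < C)
    (hle : ∀ᶠ t in 𝓝 c, ∀ x, |η t x| + |deriv (η t) x| + |v t x|
      + |deriv (fun s => η s x) t| + |deriv (fun s => v s x) t| ≤ A * exp (-C * |x|)) :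
    IsMajorantAt η v c fun x => A * exp (-C * |x|) where
  continuous := by fun_prop
  integrable := (integrable_exp_neg_mul_abs hC).const_mul A
  tendsto := by simpa using (tendsto_exp_neg_mul_abs_cocompact hC).const_mul A
  eventually_le := hle

variable (hw : IsMajorantAt η v c w)
include hw

theorem isBigO_weight_one :
    (fun z : ℝ × ℝ => w z.2) =O[𝓝 c ×ˢ ⊤] fun _ => (1 : ℝ) :=
  (isBigO_top_one_of_tendsto_cocompact hw.continuous hw.tendsto).comp_tendsto tendsto_snd

theorem eventually_abs_le : ∀ᶠ t in 𝓝 c, ∀ x, |η t x| ≤ w x ∧ |deriv (η t) x| ≤ w x ∧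
    |v t x| ≤ w x ∧ |deriv (fun s => η s x) t| ≤ w x ∧ |deriv (fun s => v s x) t| ≤ w x := by
  refine hw.eventually_le.mono fun t ht x => ?_
  have := ht x
  have := abs_nonneg (η t x)
  have := abs_nonneg (deriv (η t) x)
  have := abs_nonneg (v t x)
  have := abs_nonneg (deriv (fun s => η s x) t)
  have := abs_nonneg (deriv (fun s => v s x) t)
  refine ⟨?_, ?_, ?_, ?_, ?_⟩ <;> linarith

theorem isBigO_eta : (fun z : ℝ × ℝ => η z.1 z.2) =O[𝓝 c ×ˢ ⊤] fun z => w z.2 :=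
  isBigO_prod_top_of_eventually_le <| hw.eventually_abs_le.mono fun _ ht x => (ht x).1

theorem isBigO_deriv_eta : (fun z : ℝ × ℝ => deriv (η z.1) z.2) =O[𝓝 c ×ˢ ⊤] fun z => w z.2 :=
  isBigO_prod_top_of_eventually_le (f := fun t => deriv (η t)) <|
    hw.eventually_abs_le.mono fun _ ht x => (ht x).2.1

theorem isBigO_v : (fun z : ℝ × ℝ => v z.1 z.2) =O[𝓝 c ×ˢ ⊤] fun z => w z.2 :=
  isBigO_prod_top_of_eventually_le <| hw.eventually_abs_le.mono fun _ ht x => (ht x).2.2.1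

theorem isBigO_eta_mul_v : (fun z : ℝ × ℝ => η z.1 z.2 * v z.1 z.2) =O[𝓝 c ×ˢ ⊤] fun z => w z.2 :=
  isBigO_mul_of_isBigO_one (hw.isBigO_eta.trans hw.isBigO_weight_one) hw.isBigO_v

theorem tendsto_eta_cocompact : Tendsto (η c) (cocompact ℝ) (𝓝 0) :=
  squeeze_zero_norm (fun x => (hw.eventually_abs_le.self_of_nhds x).1) hw.tendsto

end IsMajorantAt

/-- A branch of traveling waves parametrized by its speed `c ∈ U`. -/
structure IsWaveBranch (κ : ℝ) (U : Set ℝ) (η v : ℝ → ℝ → ℝ) : Prop where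
  isOpen : IsOpen U
  contDiffOn : ContDiffOn ℝ 1 (fun z : ℝ × ℝ => (η z.1 z.2, v z.1 z.2)) (U ×ˢ univ)
  isTravelingWave : ∀ c ∈ U, IsTravelingWave κ c (η c) (v c)
  exists_isMajorantAt : ∀ c ∈ U, ∃ w, IsMajorantAt η v c w

/-- The integrand of the difference of the actions `E - t P` of the wave of speed `t` and `E - c P`
of the wave of speed `c`, once its second derivatives have been integrated away. -/
def actionIncrement (κ : ℝ) (η v : ℝ → ℝ → ℝ) (c t x : ℝ) : ℝ :=
  (kineticCoeff κ (η t x) - kineticCoeff κ (η c x)) * (deriv (η t) x * deriv (η c) x)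
    + (potentialDensity t (η t x) (v t x) - potentialDensity c (η c x) (v c x))
    - (densityGradient t (η t) (v t) x + densityGradient c (η c) (v c) x) / 2 * (η t x - η c x)

namespace IsWaveBranch

variable {κ c : ℝ} {U : Set ℝ} {η v : ℝ → ℝ → ℝ} {w : ℝ → ℝ}

section Regularity

variable (h : IsWaveBranch κ U η v) (hc : c ∈ U)
include h hc

theorem eventually_isTravelingWave : ∀ᶠ t in 𝓝 c, IsTravelingWave κ t (η t) (v t) :=
  (h.isOpen.eventually_mem hc).mono h.isTravelingWave

theorem contDiffAt (x : ℝ) : ContDiffAt ℝ 1 (fun z : ℝ × ℝ => (η z.1 z.2, v z.1 z.2)) (c, x) :=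
  h.contDiffOn.contDiffAt (prod_mem_nhds (h.isOpen.mem_nhds hc) univ_mem)

theorem contDiffAt_eta (x : ℝ) : ContDiffAt ℝ 1 (fun z : ℝ × ℝ => η z.1 z.2) (c, x) :=
  contDiffAt_fst.comp (c, x) (h.contDiffAt hc x)

theorem contDiffAt_v (x : ℝ) : ContDiffAt ℝ 1 (fun z : ℝ × ℝ => v z.1 z.2) (c, x) :=
  contDiffAt_snd.comp (c, x) (h.contDiffAt hc x)

theorem differentiableAt_eta (x : ℝ) : DifferentiableAt ℝ (fun t => η t x) c :=
  differentiableAt_left_of_uncurry ((h.contDiffAt_eta hc x).differentiableAt one_ne_zero)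

theorem differentiableAt_v (x : ℝ) : DifferentiableAt ℝ (fun t => v t x) c :=
  differentiableAt_left_of_uncurry ((h.contDiffAt_v hc x).differentiableAt one_ne_zero)

theorem continuousAt_densityGradient (x : ℝ) :
    ContinuousAt (fun t => densityGradient t (η t) (v t) x) c := by
  have hη := (h.differentiableAt_eta hc x).continuousAt
  have hv := (h.differentiableAt_v hc x).continuousAt
  have hη' := continuousAt_deriv_of_contDiffAt_uncurry (h.contDiffAt_eta hc x)
  have hinv := (continuousAt_const.sub hη).inv₀ ((h.isTravelingWave c hc).one_sub_ne_zero x)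
  exact ((((hinv.mul hη').pow 2).div_const 4).sub (hv.pow 2)).add hη |>.add
    (continuousAt_id.mul hv)

theorem hasDerivAt_eta_mul_v (x : ℝ) :
    HasDerivAt (fun t => η t x * v t x)
      (deriv (fun t => η t x) c * v c x + η c x * deriv (fun t => v t x) c) c :=
  (h.differentiableAt_eta hc x).hasDerivAt.mul (h.differentiableAt_v hc x).hasDerivAt

theorem hasDerivAt_actionIncrement (x : ℝ) :
    HasDerivAt (fun t => actionIncrement κ η v c t x) (η c x * v c x) c := by
  have hη := (h.differentiableAt_eta hc x).hasDerivAt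
  have hη' := continuousAt_deriv_of_contDiffAt_uncurry (h.contDiffAt_eta hc x)
  have hwave := h.isTravelingWave c hc
  have hk := ((hasDerivAt_kineticCoeff κ (hwave.lt_one x).ne).comp c hη).sub_const
    (kineticCoeff κ (η c x))
  have hkinetic := hasDerivAt_mul_of_eq_zero hk (sub_self _)
    (hη'.fun_mul (continuousAt_const (y := deriv (η c) x)))
  have hpotential := (hasDerivAt_potentialDensity hη
    (h.differentiableAt_v hc x).hasDerivAt).sub_const (potentialDensity c (η c x) (v c x))
  have hgradient := hasDerivAt_mul_of_eq_zero (hη.sub_const (η c x)) (sub_self _)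
    (((h.continuousAt_densityGradient hc x).fun_add
      (continuousAt_const (y := densityGradient c (η c) (v c) x))).div_const 2)
  refine (((hkinetic.add hpotential).sub hgradient).congr_of_eventuallyEq
    (.of_forall fun t => ?_)).congr_deriv ?_
  · simp only [actionIncrement, Pi.add_apply, Pi.sub_apply, Function.comp_apply]
    ring
  · simp only [densityGradient]
    linear_combination -deriv (fun t => v t x) c * hwave.eq_velocity x

theorem continuous_actionIncrement {t : ℝ} (ht : t ∈ U) :
    Continuous (actionIncrement κ η v c t) := by
  have hwave_c := h.isTravelingWave c hc
  have hwave_t := h.isTravelingWave t ht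
  exact (((hwave_t.continuous_kineticCoeff.sub hwave_c.continuous_kineticCoeff).mul
    (hwave_t.differentiable_deriv.continuous.mul hwave_c.differentiable_deriv.continuous)).add
    (hwave_t.continuous_potentialDensity.sub hwave_c.continuous_potentialDensity)).sub
    (((hwave_t.continuous_densityGradient.add hwave_c.continuous_densityGradient).div_const 2).mul
      (hwave_t.differentiable.continuous.sub hwave_c.differentiable.continuous))

end Regularity

section Estimates

variable (h : IsWaveBranch κ U η v) (hc : c ∈ U) (hw : IsMajorantAt η v c w)
include h hc hw

theorem isBigO_eta_sub :
    (fun z : ℝ × ℝ => η z.1 z.2 - η c z.2) =O[𝓝 c ×ˢ ⊤] fun z => (z.1 - c) * w z.2 :=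
  isBigO_sub_of_eventually_norm_deriv_le
    ((h.isOpen.eventually_mem hc).mono fun _ => h.differentiableAt_eta)
    (hw.eventually_abs_le.mono fun _ ht x => (ht x).2.2.2.1)

theorem isBigO_v_sub :
    (fun z : ℝ × ℝ => v z.1 z.2 - v c z.2) =O[𝓝 c ×ˢ ⊤] fun z => (z.1 - c) * w z.2 :=
  isBigO_sub_of_eventually_norm_deriv_le
    ((h.isOpen.eventually_mem hc).mono fun _ => h.differentiableAt_v)
    (hw.eventually_abs_le.mono fun _ ht x => (ht x).2.2.2.2)

theorem isBigO_inv : (fun z : ℝ × ℝ => (1 - η z.1 z.2)⁻¹) =O[𝓝 c ×ˢ ⊤] fun _ => (1 : ℝ) := by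
  have hwave := h.isTravelingWave c hc
  have hlim : Tendsto (fun x => (1 - η c x)⁻¹) (cocompact ℝ) (𝓝 (1 - 0)⁻¹) :=
    (hw.tendsto_eta_cocompact.const_sub 1).inv₀ (by norm_num)
  have hslice := isBigO_top_one_of_tendsto_cocompact hwave.continuous_inv hlim
  have hfactor : Tendsto (fun z : ℝ × ℝ => z.1 - c) (𝓝 c ×ˢ ⊤) (𝓝 0) := by
    simpa using (tendsto_fst (f := 𝓝 c) (g := (⊤ : Filter ℝ))).sub_const c
  have hsub : (fun z : ℝ × ℝ => η z.1 z.2 - η c z.2) =o[𝓝 c ×ˢ ⊤] fun _ => (1 : ℝ) := by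
    simpa using (h.isBigO_eta_sub hc hw).trans_isLittleO
      (((isLittleO_one_iff ℝ).2 hfactor).mul_isBigO hw.isBigO_weight_one)
  refine isBigO_inv_of_tendsto_sub (f₀ := fun z : ℝ × ℝ => 1 - η c z.2) ?_
    (fun z => hwave.one_sub_ne_zero z.2) (hslice.comp_tendsto tendsto_snd)
  simpa using (isLittleO_one_iff ℝ).1 hsub

theorem isBigO_kineticCoeff :
    (fun z : ℝ × ℝ => kineticCoeff κ (η z.1 z.2)) =O[𝓝 c ×ˢ ⊤] fun _ => (1 : ℝ) := by
  simpa only [kineticCoeff, div_eq_inv_mul] using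
    ((h.isBigO_inv hc hw).const_mul_left 4⁻¹).sub (isBigO_const_const _ one_ne_zero _)

theorem isBigO_densityGradient :
    (fun z : ℝ × ℝ => densityGradient z.1 (η z.1) (v z.1) z.2) =O[𝓝 c ×ˢ ⊤] fun _ => (1 : ℝ) := by
  have hone := hw.isBigO_weight_one
  have hη := hw.isBigO_eta.trans hone
  have hv := hw.isBigO_v.trans hone
  have hspeed : (fun z : ℝ × ℝ => z.1) =O[𝓝 c ×ˢ ⊤] fun _ => (1 : ℝ) := tendsto_fst.isBigO_one ℝ
  have hflux := isBigO_mul_of_isBigO_one (h.isBigO_inv hc hw) (hw.isBigO_deriv_eta.trans hone)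
  simpa only [densityGradient, sq, div_eq_inv_mul] using
    ((((isBigO_mul_of_isBigO_one hflux hflux).const_mul_left 4⁻¹).sub
      (isBigO_mul_of_isBigO_one hv hv)).add hη).add (isBigO_mul_of_isBigO_one hspeed hv)

theorem isBigO_actionDensity :
    (fun z : ℝ × ℝ => actionDensity κ z.1 (η z.1) (v z.1) z.2) =O[𝓝 c ×ˢ ⊤] fun z => w z.2 := by
  have hone := hw.isBigO_weight_one
  have hη := hw.isBigO_eta.trans hone
  have hv := hw.isBigO_v.trans hone
  have hspeed : (fun z : ℝ × ℝ => z.1) =O[𝓝 c ×ˢ ⊤] fun _ => (1 : ℝ) := tendsto_fst.isBigO_one ℝ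
  have hkinetic := isBigO_mul_of_isBigO_one
    (isBigO_mul_of_isBigO_one (h.isBigO_kineticCoeff hc hw) (hw.isBigO_deriv_eta.trans hone))
    hw.isBigO_deriv_eta
  have hv_sq := isBigO_mul_of_isBigO_one
    (isBigO_mul_of_isBigO_one ((isBigO_const_const (1 : ℝ) one_ne_zero _).sub hη) hv) hw.isBigO_v
  have hη_sq := (isBigO_mul_of_isBigO_one hη hw.isBigO_eta).const_mul_left 2⁻¹
  have hcross := isBigO_mul_of_isBigO_one hspeed hw.isBigO_eta_mul_v
  refine (hkinetic.add ((hv_sq.add hη_sq).add hcross)).congr_left fun z => ?_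
  simp only [actionDensity, potentialDensity]
  ring

theorem isBigO_kineticCoeff_sub :
    (fun z : ℝ × ℝ => kineticCoeff κ (η z.1 z.2) - kineticCoeff κ (η c z.2))
      =O[𝓝 c ×ˢ ⊤] fun z => (z.1 - c) * w z.2 := by
  have hinv := h.isBigO_inv hc hw
  have hinv_c := isBigO_slice (g := fun _ => (1 : ℝ)) (f := fun t x => (1 - η t x)⁻¹) hinv
  refine ((isBigO_mul_of_isBigO_one hinv (isBigO_mul_of_isBigO_one hinv_c
    (h.isBigO_eta_sub hc hw))).const_mul_left 4⁻¹).congr' ?_ .rfl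
  filter_upwards [(h.eventually_isTravelingWave hc).prod_inl ⊤] with z hz
  rw [kineticCoeff_sub κ (hz.lt_one z.2).ne ((h.isTravelingWave c hc).lt_one z.2).ne]
  ring

theorem isBigO_eta_mul_v_sub :
    (fun z : ℝ × ℝ => η z.1 z.2 * v z.1 z.2 - η c z.2 * v c z.2)
      =O[𝓝 c ×ˢ ⊤] fun z => (z.1 - c) * w z.2 := by
  have hη_c := isBigO_slice (g := fun _ => (1 : ℝ)) (hw.isBigO_eta.trans hw.isBigO_weight_one)
  refine ((isBigO_mul_of_isBigO_one (hw.isBigO_v.trans hw.isBigO_weight_one)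
    (h.isBigO_eta_sub hc hw)).add
    (isBigO_mul_of_isBigO_one hη_c (h.isBigO_v_sub hc hw))).congr_left fun z => ?_
  ring

theorem isBigO_potentialDensity_sub :
    (fun z : ℝ × ℝ => potentialDensity z.1 (η z.1 z.2) (v z.1 z.2)
      - potentialDensity c (η c z.2) (v c z.2)) =O[𝓝 c ×ˢ ⊤] fun z => (z.1 - c) * w z.2 := by
  have hone := hw.isBigO_weight_one
  have hη := hw.isBigO_eta.trans hone
  have hv := hw.isBigO_v.trans hone
  have hη_c := isBigO_slice (g := fun _ => (1 : ℝ)) hη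
  have hv_c := isBigO_slice (g := fun _ => (1 : ℝ)) hv
  have hv_coeff : (fun z : ℝ × ℝ => (v z.1 z.2 + v c z.2) * (1 - η z.1 z.2) + c * η c z.2)
      =O[𝓝 c ×ˢ ⊤] fun _ => (1 : ℝ) :=
    (isBigO_mul_of_isBigO_one (hv.add hv_c)
      ((isBigO_const_const (1 : ℝ) one_ne_zero _).sub hη)).add (hη_c.const_mul_left c)
  have hη_coeff : (fun z : ℝ × ℝ => (η z.1 z.2 + η c z.2) / 2 + c * v z.1 z.2 - v c z.2 ^ 2)
      =O[𝓝 c ×ˢ ⊤] fun _ => (1 : ℝ) := by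
    simpa only [sq, div_eq_inv_mul] using
      (((hη.add hη_c).const_mul_left 2⁻¹).add (hv.const_mul_left c)).sub
        (isBigO_mul_of_isBigO_one hv_c hv_c)
  have hspeed := (isBigO_refl (fun z : ℝ × ℝ => z.1 - c) (𝓝 c ×ˢ ⊤)).mul hw.isBigO_eta_mul_v
  simpa only [potentialDensity_sub] using
    ((isBigO_mul_of_isBigO_one hv_coeff (h.isBigO_v_sub hc hw)).add
      (isBigO_mul_of_isBigO_one hη_coeff (h.isBigO_eta_sub hc hw))).add hspeed

theorem isBigO_densityGradient_add :
    (fun z : ℝ × ℝ => (densityGradient z.1 (η z.1) (v z.1) z.2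
      + densityGradient c (η c) (v c) z.2) / 2) =O[𝓝 c ×ˢ ⊤] fun _ => (1 : ℝ) := by
  have hg := h.isBigO_densityGradient hc hw
  have hg_c := isBigO_slice (g := fun _ => (1 : ℝ))
    (f := fun t x => densityGradient t (η t) (v t) x) hg
  simpa only [div_eq_inv_mul] using (hg.add hg_c).const_mul_left 2⁻¹

theorem isBigO_actionIncrement :
    (fun z : ℝ × ℝ => actionIncrement κ η v c z.1 z.2)
      =O[𝓝 c ×ˢ ⊤] fun z => (z.1 - c) * w z.2 := by
  have hη' := hw.isBigO_deriv_eta.trans hw.isBigO_weight_one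
  have hη'_c := isBigO_slice (g := fun _ => (1 : ℝ)) (f := fun t => deriv (η t)) hη'
  have hkinetic := isBigO_mul_of_isBigO_one (isBigO_mul_of_isBigO_one hη' hη'_c)
    (h.isBigO_kineticCoeff_sub hc hw)
  refine ((hkinetic.add (h.isBigO_potentialDensity_sub hc hw)).sub (isBigO_mul_of_isBigO_one
    (h.isBigO_densityGradient_add hc hw) (h.isBigO_eta_sub hc hw))).congr_left fun z => ?_
  simp only [actionIncrement]
  ring

theorem eventually_integrable_eta_mul_v :
    ∀ᶠ t in 𝓝 c, Integrable fun x => η t x * v t x :=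
  eventually_integrable_of_isBigO (F := fun t x => η t x * v t x) hw.isBigO_eta_mul_v
    hw.integrable <| (h.eventually_isTravelingWave hc).mono fun _ ht =>
      (ht.differentiable.continuous.mul ht.continuous_velocity).aestronglyMeasurable

theorem eventually_integrable_actionDensity :
    ∀ᶠ t in 𝓝 c, Integrable (actionDensity κ t (η t) (v t)) :=
  eventually_integrable_of_isBigO (F := fun t => actionDensity κ t (η t) (v t))
    (h.isBigO_actionDensity hc hw) hw.integrable <|
    (h.eventually_isTravelingWave hc).mono fun _ ht =>
      ht.continuous_actionDensity.aestronglyMeasurable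

theorem eventually_integrable_flux_mul {F : ℝ → ℝ → ℝ}
    (hF : (fun z : ℝ × ℝ => F z.1 z.2) =O[𝓝 c ×ˢ ⊤] fun z => w z.2)
    (hcont : ∀ t ∈ U, Continuous (F t)) :
    ∀ᶠ t in 𝓝 c, Integrable fun x => (kineticCoeff κ (η t x) * deriv (η t) x
      + kineticCoeff κ (η c x) * deriv (η c) x) * (F t x - F c x) := by
  have hflux := isBigO_mul_of_isBigO_one (h.isBigO_kineticCoeff hc hw)
    (hw.isBigO_deriv_eta.trans hw.isBigO_weight_one)
  have hflux_c := isBigO_slice (g := fun _ => (1 : ℝ))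
    (f := fun t x => kineticCoeff κ (η t x) * deriv (η t) x) hflux
  refine eventually_integrable_of_isBigO (isBigO_mul_of_isBigO_one (hflux.add hflux_c)
    (hF.sub (isBigO_slice hF))) hw.integrable ?_
  filter_upwards [h.isOpen.eventually_mem hc] with t ht
  have hwave_c := h.isTravelingWave c hc
  have hwave_t := h.isTravelingWave t ht
  exact (((hwave_t.continuous_kineticCoeff.mul hwave_t.differentiable_deriv.continuous).add
    (hwave_c.continuous_kineticCoeff.mul hwave_c.differentiable_deriv.continuous)).mul
    ((hcont t ht).sub (hcont c hc))).aestronglyMeasurable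

theorem eventually_integrable_densityGradient_mul :
    ∀ᶠ t in 𝓝 c, Integrable fun x => (densityGradient t (η t) (v t) x
      + densityGradient c (η c) (v c) x) / 2 * (η t x - η c x) := by
  refine eventually_integrable_of_isBigO (isBigO_mul_of_isBigO_one
    (h.isBigO_densityGradient_add hc hw) (hw.isBigO_eta.sub (isBigO_slice hw.isBigO_eta)))
    hw.integrable ?_
  filter_upwards [h.eventually_isTravelingWave hc] with t ht
  have hwave_c := h.isTravelingWave c hc
  exact (((ht.continuous_densityGradient.add hwave_c.continuous_densityGradient).div_const 2).mul
    (ht.differentiable.continuous.sub hwave_c.differentiable.continuous)).aestronglyMeasurable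

theorem eventually_integral_actionDensity_sub :
    ∀ᶠ t in 𝓝 c, (∫ x, actionDensity κ t (η t) (v t) x) - ∫ x, actionDensity κ c (η c) (v c) x
      = ∫ x, actionIncrement κ η v c t x := by
  have hL := h.eventually_integrable_actionDensity hc hw
  have hwave_c := h.isTravelingWave c hc
  filter_upwards [hL, h.eventually_isTravelingWave hc,
    h.eventually_integrable_densityGradient_mul hc hw,
    h.eventually_integrable_flux_mul hc hw (F := η) hw.isBigO_eta
      fun t ht => (h.isTravelingWave t ht).differentiable.continuous,
    h.eventually_integrable_flux_mul hc hw (F := fun t => deriv (η t)) hw.isBigO_deriv_eta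
      fun t ht => (h.isTravelingWave t ht).differentiable_deriv.continuous]
    with t hLt hwave_t hgu hqu hqp
  exact integral_mul_sq_add_sub (fun x => (hwave_c.differentiable x).hasDerivAt)
    (fun x => (hwave_t.differentiable x).hasDerivAt) hwave_c.hasDerivAt_flux
    hwave_t.hasDerivAt_flux hL.self_of_nhds hLt hqp hgu hqu

theorem hasDerivAt_integral_actionIncrement :
    HasDerivAt (fun t => ∫ x, actionIncrement κ η v c t x) (∫ x, η c x * v c x) c := by
  have hD := h.isBigO_actionIncrement hc hw
  have hfactor : Tendsto (fun z : ℝ × ℝ => z.1 - c) (𝓝 c ×ˢ ⊤) (𝓝 (c - c)) :=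
    tendsto_fst.sub_const c
  have hDw := hD.trans (isBigO_mul_of_isBigO_one (hfactor.isBigO_one ℝ) (isBigO_refl _ _))
  refine hasDerivAt_integral_of_isBigO_sub (eventually_integrable_of_isBigO hDw hw.integrable ?_)
    (hD.congr_left fun z => ?_) hw.integrable (h.hasDerivAt_actionIncrement hc)
  · exact (h.isOpen.eventually_mem hc).mono fun t ht =>
      (h.continuous_actionIncrement hc ht).aestronglyMeasurable
  · simp [actionIncrement]

theorem hasDerivAt_integral_actionDensity :
    HasDerivAt (fun t => ∫ x, actionDensity κ t (η t) (v t) x) (∫ x, η c x * v c x) c :=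
  ((h.hasDerivAt_integral_actionIncrement hc hw).const_add _).congr_of_eventuallyEq <|
    (h.eventually_integral_actionDensity_sub hc hw).mono fun _ ht => sub_eq_iff_eq_add'.1 ht

end Estimates

section Derivatives

variable (h : IsWaveBranch κ U η v) (hc : c ∈ U)
include h hc

theorem hasDerivAt_Ehy_sub_mul_Phy :
    HasDerivAt (fun t => Ehy κ (η t) (v t) - t * Phy (η t) (v t)) (-Phy (η c) (v c)) c := by
  obtain ⟨w, hw⟩ := h.exists_isMajorantAt c hc
  rw [Phy, neg_neg]
  refine (h.hasDerivAt_integral_actionDensity hc hw).congr_of_eventuallyEq ?_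
  filter_upwards [h.eventually_integrable_actionDensity hc hw,
    h.eventually_integrable_eta_mul_v hc hw] with t hL hηv
  exact Ehy_sub_mul_Phy hL hηv

theorem differentiableAt_Phy : DifferentiableAt ℝ (fun t => Phy (η t) (v t)) c := by
  obtain ⟨w, hw⟩ := h.exists_isMajorantAt c hc
  exact (hasDerivAt_integral_of_isBigO_sub (h.eventually_integrable_eta_mul_v hc hw)
    (h.isBigO_eta_mul_v_sub hc hw) hw.integrable (h.hasDerivAt_eta_mul_v hc)).differentiableAt.neg

end Derivatives

theorem of_exp_decay (hU : IsOpen U)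
    (hjoint : ContDiffOn ℝ 1 (fun z : ℝ × ℝ => (η z.1 z.2, v z.1 z.2)) (U ×ˢ univ))
    (hwave : ∀ c ∈ U, IsTravelingWave κ c (η c) (v c))
    (hdec : ∀ K : Set ℝ, IsCompact K → K ⊆ U → ∃ A C : ℝ, 0 < C ∧ ∀ c ∈ K, ∀ x,
      |η c x| + |deriv (η c) x| + |v c x| + |deriv (fun t => η t x) c|
        + |deriv (fun t => v t x) c| ≤ A * exp (-C * |x|)) :
    IsWaveBranch κ U η v where
  isOpen := hU
  contDiffOn := hjoint
  isTravelingWave := hwave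
  exists_isMajorantAt c hc := by
    obtain ⟨K, hK, hcK, hKU⟩ := exists_compact_subset hU hc
    obtain ⟨A, C, hC, hle⟩ := hdec K hK hKU
    exact ⟨_, .of_exp_decay hC (mem_of_superset (mem_interior_iff_mem_nhds.1 hcK) hle)⟩

end IsWaveBranch

theorem stmt17_general {κ : ℝ} {U : Set ℝ} {η v : ℝ → ℝ → ℝ} (h : IsWaveBranch κ U η v) {c : ℝ}
    (hc : c ∈ U) :
    HasDerivAt (fun t => Ehy κ (η t) (v t) - t * Phy (η t) (v t)) (-Phy (η c) (v c)) c ∧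
      HasDerivAt (deriv fun t => Ehy κ (η t) (v t) - t * Phy (η t) (v t))
        (-deriv (fun t => Phy (η t) (v t)) c) c := by
  refine ⟨h.hasDerivAt_Ehy_sub_mul_Phy hc, ?_⟩
  refine (h.differentiableAt_Phy hc).hasDerivAt.fun_neg.congr_of_eventuallyEq ?_
  filter_upwards [h.isOpen.eventually_mem hc] with t ht
  exact (h.hasDerivAt_Ehy_sub_mul_Phy ht).deriv

/-- along a C¹ branch of traveling waves,
d(c) = E((η_c,v_c)) - cP((η_c,v_c)) satisfies d'(c) = -P((η_c,v_c)); if moreover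
c ↦ P((η_c,v_c)) is C¹, then d'' (c) = -(d/dc)P((η_c,v_c)). -/
theorem stmt17 (κ c₁ c₂ : ℝ) (hκ : κ < 1 / 2) (hc₁ : 0 < c₁) (hc₁₂ : c₁ < c₂)
    (hc₂ : c₂ < Real.sqrt 2)
    (η v : ℝ → ℝ → ℝ)
    (hjoint : ContDiffOn ℝ 1 (fun p : ℝ × ℝ => (η p.1 p.2, v p.1 p.2))
      (Set.Ioo c₁ c₂ ×ˢ (Set.univ : Set ℝ)))
    (hxreg : ∀ c : ℝ, c ∈ Set.Ioo c₁ c₂ → ContDiff ℝ 2 (η c) ∧ ContDiff ℝ 1 (v c))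
    (hb : ∀ c : ℝ, c ∈ Set.Ioo c₁ c₂ → ∀ x : ℝ, 0 < η c x ∧ η c x < 1)
    (hdec : ∀ K : Set ℝ, IsCompact K → K ⊆ Set.Ioo c₁ c₂ →
      ∃ A C : ℝ, 0 < A ∧ 0 < C ∧ ∀ c : ℝ, c ∈ K → ∀ x : ℝ,
        |η c x| + |deriv (η c) x| + |deriv (deriv (η c)) x| + |v c x|
          + |deriv (fun c' : ℝ => η c' x) c| + |deriv (fun c' : ℝ => v c' x) c|
          ≤ A * Real.exp (-C * |x|))
    (hsys : ∀ c : ℝ, c ∈ Set.Ioo c₁ c₂ → ∀ x : ℝ,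
      (-c * η c x = 2 * v c x * (1 - η c x)) ∧
      (-c * v c x
        = -(deriv (deriv (η c)) x / (2 * (1 - η c x))
            + (deriv (η c) x) ^ 2 / (4 * (1 - η c x) ^ 2)
            + (v c x) ^ 2 - η c x - κ * deriv (deriv (η c)) x))) :
    (∀ c : ℝ, c ∈ Set.Ioo c₁ c₂ →
      HasDerivAt (fun c' : ℝ => Ehy κ (η c') (v c') - c' * Phy (η c') (v c'))
        (-(Phy (η c) (v c))) c) ∧
    (ContDiffOn ℝ 1 (fun c : ℝ => Phy (η c) (v c)) (Set.Ioo c₁ c₂) →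
      ∀ c : ℝ, c ∈ Set.Ioo c₁ c₂ →
        HasDerivAt (deriv (fun c' : ℝ => Ehy κ (η c') (v c') - c' * Phy (η c') (v c')))
          (-(deriv (fun c' : ℝ => Phy (η c') (v c')) c)) c) := by
  have hbranch : IsWaveBranch κ (Ioo c₁ c₂) η v := .of_exp_decay isOpen_Ioo hjoint
    (fun c hc => .of_contDiff (hxreg c hc).1 (fun x => (hb c hc x).2) (hsys c hc))
    fun K hK hKU => (hdec K hK hKU).imp fun A => Exists.imp fun C ⟨_, hC, hle⟩ =>
      ⟨hC, fun c hc x => by linarith [hle c hc x, abs_nonneg (deriv (deriv (η c)) x)]⟩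
  exact ⟨fun c hc => (stmt17_general hbranch hc).1, fun _ c hc => (stmt17_general hbranch hc).2⟩
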